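/- For every odd prime p there exists a finite powerful p-group G such that Ω₂(G^p) is not abelian, so Ω₂(G^p) has powerful nilpotency class exactly 2; in particular the bound "powerful nilpotency class of Ω_i(G^p) is at most i" is attained for i = 2. (For instance, G of order p¹¹ with presentation ⟨a, b, c ∣ a^{p³} = b^{p³} = c^{p⁵} = 1, [a,c] = [b,c] = 1, [a,b] = c^{p²}⟩ works.) -/

import Mathlib

/-- The subgroup generated by the `n`-th powers of the elements of `H`. -/
def subgroupPow {G : Type*} [Group G] (H : Subgroup G) (n : ℕ) : Subgroup G :=
  Subgroup.closure {x | ∃ h ∈ H, h ^ n = x}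

/-- `Ω_i(H)`: the subgroup generated by the elements of `H` whose order divides `p ^ i`. -/
def omegaSubgroup {G : Type*} [Group G] (p i : ℕ) (H : Subgroup G) : Subgroup G :=
  Subgroup.closure {x | x ∈ H ∧ x ^ p ^ i = 1}

/-- A finite `p`-group `G` is powerful if `[G,G] ≤ G^p` when `p` is odd,
and `[G,G] ≤ G^4` when `p = 2`. -/
def IsPowerful (p : ℕ) (G : Type*) [Group G] : Prop :=
  if p = 2 then commutator G ≤ subgroupPow (⊤ : Subgroup G) 4
  else commutator G ≤ subgroupPow (⊤ : Subgroup G) p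

/-- The subgroup of `n`-th powers of the whole group is normal (indeed characteristic). -/
instance subgroupPow_top_normal {G : Type*} [Group G] (n : ℕ) :
    (subgroupPow (⊤ : Subgroup G) n).Normal := by
  constructor
  intro x hx g
  have key : Subgroup.map (MulAut.conj g).toMonoidHom (subgroupPow (⊤ : Subgroup G) n)
      ≤ subgroupPow (⊤ : Subgroup G) n := by
    rw [subgroupPow, MonoidHom.map_closure]
    apply Subgroup.closure_le _ |>.mpr
    rintro y ⟨z, ⟨h, -, rfl⟩, rfl⟩
    exact Subgroup.subset_closure ⟨(MulAut.conj g) h, trivial, by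
      simp [((MulAut.conj g).toMonoidHom.map_pow h n).symm]⟩
  have hmem : (MulAut.conj g) x ∈
      Subgroup.map (MulAut.conj g).toMonoidHom (subgroupPow (⊤ : Subgroup G) n) :=
    Subgroup.mem_map_of_mem _ hx
  simpa [MulAut.conj_apply] using key hmem

/-- A powerfully central chain `{1} = H 0 ≤ H 1 ≤ ⋯ ≤ H n = G` of length `n`:
`[H (k+1), G] ≤ (H k)^p` for all `k < n`. -/
def IsPowerfullyCentralChain (p : ℕ) {G : Type*} [Group G] (n : ℕ) (H : ℕ → Subgroup G) : Prop :=
  H 0 = ⊥ ∧ H n = ⊤ ∧ (∀ k, k < n → H k ≤ H (k + 1)) ∧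
    ∀ k, k < n → ⁅H (k + 1), (⊤ : Subgroup G)⁆ ≤ subgroupPow (H k) p

/-- A group is powerfully nilpotent if it is powerful and admits a powerfully central chain. -/
def IsPowerfullyNilpotent (p : ℕ) (G : Type*) [Group G] : Prop :=
  IsPowerful p G ∧ ∃ (n : ℕ) (H : ℕ → Subgroup G), IsPowerfullyCentralChain p n H

/-- The powerful nilpotency class: the least possible length of a powerfully central chain. -/
noncomputable def powerfulNilpotencyClass (p : ℕ) (G : Type*) [Group G] : ℕ :=
  sInf {n | ∃ H : ℕ → Subgroup G, IsPowerfullyCentralChain p n H}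

/-!
The witness is the group `G` of order `p¹¹` given by
`⟨a, b, c ∣ a^{p³} = b^{p³} = c^{p⁵} = 1, [a,c] = [b,c] = 1, [a,b] = c^{p²}⟩`, realised as a
generalized Heisenberg group on `V × C` with `V = (ℤ/p³)²` and `C = ℤ/p⁵`: its commutators are the
central elements `(0, β v w - β w v)`, where `β` takes values in `p² C`.

A nonabelian group `K` whose commutators are all `p`-th powers of central elements has powerful
nilpotency class `2`, because `1 ≤ Z(K) ≤ K` is a powerfully central chain, while the `k`-th term
of any such chain lies in the `k`-th term of the upper central series. This applies to
`Ω = Ω₂(G^p)`: elements of `G^p` have first component in `pV`, so a commutator of two of them is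
`(0, p⁴ c) = (0, p³ c)^p`, and `(0, p³ c) = (0, p² c)^p` is a central element of `Ω`. Finally `Ω`
contains `a^p` and `b^p`, whose commutator is `c^{p⁴} ≠ 1`.
-/

open scoped commutatorElement

section Group

variable {G : Type*} [Group G]

lemma pow_mem_subgroupPow {H : Subgroup G} {g : G} (hg : g ∈ H) (n : ℕ) :
    g ^ n ∈ subgroupPow H n :=
  Subgroup.subset_closure ⟨g, hg, rfl⟩

lemma subgroupPow_le (H : Subgroup G) (n : ℕ) : subgroupPow H n ≤ H := by
  rw [subgroupPow, Subgroup.closure_le]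
  rintro _ ⟨h, hh, rfl⟩
  exact pow_mem hh n

lemma subgroupPow_mono {H K : Subgroup G} (h : H ≤ K) (n : ℕ) :
    subgroupPow H n ≤ subgroupPow K n :=
  Subgroup.closure_mono fun _ ⟨g, hg, e⟩ => ⟨g, h hg, e⟩

lemma omegaSubgroup_le (p i : ℕ) (H : Subgroup G) : omegaSubgroup p i H ≤ H := by
  rw [omegaSubgroup, Subgroup.closure_le]
  exact fun _ hx => hx.1

lemma pow_mem_omegaSubgroup_subgroupPow {p i : ℕ} {H : Subgroup G} {g : G} (hg : g ∈ H)
    (h : g ^ p ^ (i + 1) = 1) : g ^ p ∈ omegaSubgroup p i (subgroupPow H p) :=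
  Subgroup.subset_closure ⟨pow_mem_subgroupPow hg p, by rw [← pow_mul, ← pow_succ', h]⟩

variable {p : ℕ}

lemma commutator_le_subgroupPow {H : Subgroup G}
    (h : ∀ g₁ g₂ : G, ∃ z ∈ H, z ^ p = ⁅g₁, g₂⁆) : commutator G ≤ subgroupPow H p := by
  rw [commutator_def, Subgroup.commutator_le]
  rintro g₁ - g₂ -
  obtain ⟨z, hz, hzp⟩ := h g₁ g₂
  exact hzp ▸ pow_mem_subgroupPow hz p

lemma isPowerful_of_commutator_le {H : Subgroup G} (hp : p ≠ 2)
    (h : commutator G ≤ subgroupPow H p) : IsPowerful p G := by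
  rw [IsPowerful, if_neg hp]
  exact h.trans (subgroupPow_mono le_top p)

lemma IsPowerfullyCentralChain.le_upperCentralSeries {n : ℕ} {H : ℕ → Subgroup G}
    (hH : IsPowerfullyCentralChain p n H) {k : ℕ} (hk : k ≤ n) :
    H k ≤ Subgroup.upperCentralSeries G k := by
  obtain ⟨hbot, -, -, hcomm⟩ := hH
  induction k with
  | zero => exact hbot.le
  | succ k ih =>
    intro x hx
    rw [Subgroup.mem_upperCentralSeries_succ_iff]
    intro g
    have hxg : ⁅x, g⁆ ∈ subgroupPow (H k) p :=
      hcomm k hk (Subgroup.commutator_mem_commutator hx (Subgroup.mem_top g))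
    exact ih (Nat.le_of_succ_le hk) (subgroupPow_le _ _ hxg)

lemma IsPowerfullyCentralChain.two_le {n : ℕ} {H : ℕ → Subgroup G}
    (hH : IsPowerfullyCentralChain p n H) (hG : ¬ IsMulCommutative G) : 2 ≤ n := by
  by_contra! hn
  refine hG (Subgroup.center_eq_top_iff.mp (top_le_iff.mp ?_))
  calc ⊤ = H n := hH.2.1.symm
    _ ≤ Subgroup.upperCentralSeries G n := hH.le_upperCentralSeries le_rfl
    _ ≤ Subgroup.upperCentralSeries G 1 :=
        Subgroup.upperCentralSeries_mono G (Nat.le_of_lt_succ hn)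
    _ = Subgroup.center G := Subgroup.upperCentralSeries_one G

lemma exists_isPowerfullyCentralChain_two
    (h : commutator G ≤ subgroupPow (Subgroup.center G) p) :
    ∃ H : ℕ → Subgroup G, IsPowerfullyCentralChain p 2 H := by
  refine ⟨fun | 0 => ⊥ | 1 => Subgroup.center G | _ => ⊤, rfl, rfl, fun k hk => ?_,
    fun k hk => ?_⟩
  · interval_cases k
    · exact bot_le
    · exact le_top
  · interval_cases k
    · exact (Subgroup.commutator_center_left ⊤).trans_le bot_le
    · exact h

lemma isPowerfullyNilpotent_of_commutator_le (hp : p ≠ 2)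
    (h : commutator G ≤ subgroupPow (Subgroup.center G) p) : IsPowerfullyNilpotent p G :=
  ⟨isPowerful_of_commutator_le hp h, 2, exists_isPowerfullyCentralChain_two h⟩

lemma powerfulNilpotencyClass_eq_two (hG : ¬ IsMulCommutative G)
    (h : commutator G ≤ subgroupPow (Subgroup.center G) p) :
    powerfulNilpotencyClass p G = 2 :=
  IsLeast.csInf_eq ⟨exists_isPowerfullyCentralChain_two h, fun _ ⟨_, hH⟩ => hH.two_le hG⟩

end Group

/-- The generalized Heisenberg group of a biadditive map `β : V × V → C`: the central extension of
`V` by `C` with cocycle `β`, that is, `V × C` with `(v, c) (w, d) = (v + w, c + d + β v w)`. -/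
@[ext]
structure HeisenbergGroup {V C : Type*} [AddCommGroup V] [AddCommGroup C] (β : V →+ V →+ C) where
  /-- The component in the quotient `V`. -/
  base : V
  /-- The component in the central subgroup `C`. -/
  fiber : C

namespace HeisenbergGroup

variable {V C : Type*} [AddCommGroup V] [AddCommGroup C] {β : V →+ V →+ C}

instance : Mul (HeisenbergGroup β) :=
  ⟨fun g h => ⟨g.base + h.base, g.fiber + h.fiber + β g.base h.base⟩⟩

instance : One (HeisenbergGroup β) := ⟨⟨0, 0⟩⟩

instance : Inv (HeisenbergGroup β) := ⟨fun g => ⟨-g.base, -g.fiber + β g.base g.base⟩⟩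

@[simp] lemma mul_base (g h : HeisenbergGroup β) : (g * h).base = g.base + h.base := rfl

@[simp] lemma mul_fiber (g h : HeisenbergGroup β) :
    (g * h).fiber = g.fiber + h.fiber + β g.base h.base := rfl

@[simp] lemma one_base : (1 : HeisenbergGroup β).base = 0 := rfl

@[simp] lemma one_fiber : (1 : HeisenbergGroup β).fiber = 0 := rfl

@[simp] lemma inv_base (g : HeisenbergGroup β) : g⁻¹.base = -g.base := rfl

@[simp] lemma inv_fiber (g : HeisenbergGroup β) :
    g⁻¹.fiber = -g.fiber + β g.base g.base := rfl

instance : Group (HeisenbergGroup β) := Group.ofLeftAxioms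
  (fun g h k => by
    ext
    · exact add_assoc _ _ _
    · simp only [mul_base, mul_fiber, map_add, AddMonoidHom.add_apply]; abel)
  (fun g => by ext <;> simp)
  (fun g => by ext <;> simp)

lemma commutatorElement_eq (g h : HeisenbergGroup β) :
    ⁅g, h⁆ = ⟨0, β g.base h.base - β h.base g.base⟩ := by
  rw [commutatorElement_def]
  ext
  · simp
  · simp only [mul_base, mul_fiber, inv_base, inv_fiber, map_add, map_neg, AddMonoidHom.add_apply,
      AddMonoidHom.neg_apply]
    abel

lemma pow_eq (g : HeisenbergGroup β) (n : ℕ) :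
    g ^ n = ⟨n • g.base, n • g.fiber + n.choose 2 • β g.base g.base⟩ := by
  induction n with
  | zero => ext <;> simp
  | succ n ih =>
    rw [pow_succ, ih]
    ext
    · simp [succ_nsmul]
    · simp only [mul_fiber, map_nsmul, AddMonoidHom.nsmul_apply, Nat.choose_succ_succ' n 1,
        Nat.choose_one_right, add_nsmul, one_nsmul]
      abel

lemma mk_pow_of_isotropic {v : V} (hv : β v v = 0) (c : C) (n : ℕ) :
    (⟨v, c⟩ : HeisenbergGroup β) ^ n = ⟨n • v, n • c⟩ := by
  simp [pow_eq, hv]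

lemma mk_zero_pow (c : C) (n : ℕ) : (⟨0, c⟩ : HeisenbergGroup β) ^ n = ⟨0, n • c⟩ := by
  simp [mk_pow_of_isotropic]

lemma mk_zero_mem_center (c : C) :
    (⟨0, c⟩ : HeisenbergGroup β) ∈ Subgroup.center (HeisenbergGroup β) := by
  rw [Subgroup.mem_center_iff]
  intro g
  ext <;> simp [add_comm]

lemma exists_base_eq_nsmul {n : ℕ} {g : HeisenbergGroup β}
    (hg : g ∈ subgroupPow (⊤ : Subgroup (HeisenbergGroup β)) n) : ∃ v : V, g.base = n • v := by
  induction hg using Subgroup.closure_induction with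
  | mem _ hx =>
    obtain ⟨h, -, rfl⟩ := hx
    exact ⟨h.base, by rw [pow_eq]⟩
  | one => exact ⟨0, by simp⟩
  | mul g h _ _ ihg ihh =>
    obtain ⟨v, hv⟩ := ihg
    obtain ⟨w, hw⟩ := ihh
    exact ⟨v + w, by rw [mul_base, hv, hw, nsmul_add]⟩
  | inv g _ ih =>
    obtain ⟨v, hv⟩ := ih
    exact ⟨-v, by rw [inv_base, hv, neg_nsmul]⟩

variable {p : ℕ}

lemma commutator_le_subgroupPow_center (hβ : ∀ v w, ∃ c, β v w = p • c) :
    commutator (HeisenbergGroup β) ≤ subgroupPow (Subgroup.center (HeisenbergGroup β)) p := by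
  refine commutator_le_subgroupPow fun g h => ?_
  obtain ⟨c, hc⟩ := hβ g.base h.base
  obtain ⟨d, hd⟩ := hβ h.base g.base
  exact ⟨⟨0, c - d⟩, mk_zero_mem_center _, by
    rw [mk_zero_pow, commutatorElement_eq, hc, hd, nsmul_sub]⟩

lemma commutator_omegaSubgroup_le {s i : ℕ} (hβ : ∀ v w, ∃ c, β v w = p ^ s • c)
    (hC : ∀ c : C, p ^ (s + i + 1) • c = 0) :
    commutator (omegaSubgroup p i (subgroupPow (⊤ : Subgroup (HeisenbergGroup β)) p)) ≤
      subgroupPow (Subgroup.center _) p := by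
  refine commutator_le_subgroupPow fun ⟨g, hg⟩ ⟨h, hh⟩ => ?_
  obtain ⟨v, hv⟩ := exists_base_eq_nsmul (omegaSubgroup_le _ _ _ hg)
  obtain ⟨w, hw⟩ := exists_base_eq_nsmul (omegaSubgroup_le _ _ _ hh)
  obtain ⟨c, hc⟩ := hβ v w
  obtain ⟨d, hd⟩ := hβ w v
  let y : HeisenbergGroup β := ⟨0, p ^ s • (c - d)⟩
  have y_order : y ^ p ^ (i + 1) = 1 := by
    rw [mk_zero_pow, smul_smul, ← pow_add, show i + 1 + s = s + i + 1 by ring, hC]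
    rfl
  have y_pow_central : y ^ p ∈ Subgroup.center (HeisenbergGroup β) :=
    pow_mem (mk_zero_mem_center _) p
  have y_pow_pow : (y ^ p) ^ p = ⁅g, h⁆ := by
    simp only [y, mk_zero_pow, commutatorElement_eq, hv, hw, map_nsmul, AddMonoidHom.nsmul_apply,
      hc, hd, nsmul_sub]
  refine ⟨⟨y ^ p, pow_mem_omegaSubgroup_subgroupPow (Subgroup.mem_top _) y_order⟩, ?_,
    Subtype.ext y_pow_pow⟩
  rw [Subgroup.mem_center_iff] at y_pow_central ⊢
  exact fun x => Subtype.ext (y_pow_central x)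

lemma mk_zero_pow_mem_omegaSubgroup {i : ℕ} {v : V} (hv : β v v = 0)
    (hpv : p ^ (i + 1) • v = 0) :
    (⟨v, 0⟩ : HeisenbergGroup β) ^ p ∈
      omegaSubgroup p i (subgroupPow (⊤ : Subgroup (HeisenbergGroup β)) p) := by
  refine pow_mem_omegaSubgroup_subgroupPow (Subgroup.mem_top _) ?_
  rw [mk_pow_of_isotropic hv, hpv, nsmul_zero]
  rfl

lemma not_isMulCommutative_omegaSubgroup {i : ℕ} {v w : V} (hv : β v v = 0) (hw : β w w = 0)
    (hpv : p ^ (i + 1) • v = 0) (hpw : p ^ (i + 1) • w = 0)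
    (hvw : p ^ 2 • (β v w - β w v) ≠ 0) :
    ¬ IsMulCommutative
      (omegaSubgroup p i (subgroupPow (⊤ : Subgroup (HeisenbergGroup β)) p)) := by
  rw [isMulCommutative_iff_of_setLike]
  intro hcomm
  have h := commutatorElement_eq_one_iff_mul_comm.mpr
    (hcomm _ (mk_zero_pow_mem_omegaSubgroup hv hpv) _ (mk_zero_pow_mem_omegaSubgroup hw hpw))
  apply hvw
  simpa [commutatorElement_eq, pow_eq, nsmul_sub, smul_smul, sq] using congrArg fiber h

/-- The set underlying `HeisenbergGroup β` is `V × C`. -/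
def equivProd (β : V →+ V →+ C) : HeisenbergGroup β ≃ V × C where
  toFun g := (g.base, g.fiber)
  invFun t := ⟨t.1, t.2⟩

instance [Finite V] [Finite C] : Finite (HeisenbergGroup β) := Finite.of_equiv _ (equivProd β).symm

lemma card_eq (β : V →+ V →+ C) : Nat.card (HeisenbergGroup β) = Nat.card V * Nat.card C := by
  rw [Nat.card_congr (equivProd β), Nat.card_prod]

end HeisenbergGroup

/-- Multiplication by `k` as an additive homomorphism `ℤ/m → ℤ/n`. -/
def zmodScale {m n : ℕ} (k : ℕ) (h : n ∣ k * m) : ZMod m →+ ZMod n :=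
  ZMod.lift m ⟨k • Int.castAddHom (ZMod n), by
    simpa using (ZMod.natCast_eq_zero_iff (k * m) n).mpr h⟩

lemma zmodScale_intCast {m n k : ℕ} (h : n ∣ k * m) (x : ℤ) :
    zmodScale k h (x : ZMod m) = k • (x : ZMod n) := by
  simp [zmodScale]

lemma zmodScale_one {m n k : ℕ} (h : n ∣ k * m) : zmodScale k h (1 : ZMod m) = k := by
  simpa using zmodScale_intCast h 1

lemma exists_zmodScale_eq_nsmul {m n k : ℕ} (h : n ∣ k * m) (x : ZMod m) :
    ∃ c : ZMod n, zmodScale k h x = k • c := by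
  obtain ⟨x, rfl⟩ := ZMod.intCast_surjective x
  exact ⟨x, zmodScale_intCast h x⟩

/-- The biadditive map `((x, y), (x', y')) ↦ p² x y'` from `(ℤ/p³)²` to `ℤ/p⁵`. In its Heisenberg
group the elements `a = ((1, 0), 0)`, `b = ((0, 1), 0)` and `c = (0, 1)` satisfy
`[a, b] = c ^ p²`. -/
def scaledProductForm (p : ℕ) :
    ZMod (p ^ 3) × ZMod (p ^ 3) →+ ZMod (p ^ 3) × ZMod (p ^ 3) →+ ZMod (p ^ 5) :=
  ((AddMonoidHom.mul.compr₂ (zmodScale (p ^ 2) (pow_add p 2 3).dvd)).comp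
    (AddMonoidHom.fst _ _)).compl₂ (AddMonoidHom.snd _ _)

lemma scaledProductForm_apply (p : ℕ) (v w : ZMod (p ^ 3) × ZMod (p ^ 3)) :
    scaledProductForm p v w = zmodScale (p ^ 2) (pow_add p 2 3).dvd (v.1 * w.2) := rfl

lemma exists_scaledProductForm_eq_nsmul (p : ℕ) (v w : ZMod (p ^ 3) × ZMod (p ^ 3)) :
    ∃ c, scaledProductForm p v w = p ^ 2 • c :=
  exists_zmodScale_eq_nsmul (pow_add p 2 3).dvd _

lemma isPGroup_heisenbergGroup_scaledProductForm (p : ℕ) :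
    IsPGroup p (HeisenbergGroup (scaledProductForm p)) :=
  IsPGroup.of_card (n := 11) <| by
    simp only [HeisenbergGroup.card_eq, Nat.card_prod, Nat.card_zmod]
    ring

lemma isPowerful_heisenbergGroup_scaledProductForm {p : ℕ} (hp : p ≠ 2) :
    IsPowerful p (HeisenbergGroup (scaledProductForm p)) := by
  refine isPowerful_of_commutator_le hp
    (HeisenbergGroup.commutator_le_subgroupPow_center fun v w => ?_)
  obtain ⟨c, hc⟩ := exists_scaledProductForm_eq_nsmul p v w
  exact ⟨p • c, by rw [hc, sq, mul_nsmul]⟩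

lemma commutator_omegaSubgroup_scaledProductForm_le (p : ℕ) :
    commutator (omegaSubgroup p 2
      (subgroupPow (⊤ : Subgroup (HeisenbergGroup (scaledProductForm p))) p)) ≤
      subgroupPow (Subgroup.center _) p :=
  HeisenbergGroup.commutator_omegaSubgroup_le (exists_scaledProductForm_eq_nsmul p)
    (ZModModule.char_nsmul_eq_zero (p ^ 5))

lemma not_isMulCommutative_omegaSubgroup_scaledProductForm {p : ℕ} (hp : 1 < p) :
    ¬ IsMulCommutative (omegaSubgroup p 2
      (subgroupPow (⊤ : Subgroup (HeisenbergGroup (scaledProductForm p))) p)) := by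
  refine HeisenbergGroup.not_isMulCommutative_omegaSubgroup (v := (1, 0)) (w := (0, 1))
    (by simp [scaledProductForm_apply]) (by simp [scaledProductForm_apply])
    (ZModModule.char_nsmul_eq_zero (p ^ 3) _) (ZModModule.char_nsmul_eq_zero (p ^ 3) _) fun h => ?_
  have h_pow_four : ((p ^ 4 : ℕ) : ZMod (p ^ 5)) = 0 := by
    simpa [scaledProductForm_apply, zmodScale_one, ← pow_add] using h
  rw [ZMod.natCast_eq_zero_iff, Nat.pow_dvd_pow_iff_le_right hp] at h_pow_four
  omega

theorem omega_statement_14_general (p : ℕ) (hp : 2 < p) :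
    ∃ (G : Type) (_ : Group G) (_ : Finite G),
      IsPGroup p G ∧ IsPowerful p G ∧
      ¬(∀ x ∈ omegaSubgroup p 2 (subgroupPow (⊤ : Subgroup G) p),
          ∀ y ∈ omegaSubgroup p 2 (subgroupPow (⊤ : Subgroup G) p), x * y = y * x) ∧
      IsPowerfullyNilpotent p ↥(omegaSubgroup p 2 (subgroupPow (⊤ : Subgroup G) p)) ∧
      powerfulNilpotencyClass p
        ↥(omegaSubgroup p 2 (subgroupPow (⊤ : Subgroup G) p)) = 2 := by
  have : NeZero p := ⟨by omega⟩
  have hcomm := commutator_omegaSubgroup_scaledProductForm_le p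
  have hnonabelian := not_isMulCommutative_omegaSubgroup_scaledProductForm (p := p) (by omega)
  exact ⟨HeisenbergGroup (scaledProductForm p), inferInstance, inferInstance,
    isPGroup_heisenbergGroup_scaledProductForm p,
    isPowerful_heisenbergGroup_scaledProductForm hp.ne',
    isMulCommutative_iff_of_setLike.not.mp hnonabelian,
    isPowerfullyNilpotent_of_commutator_le hp.ne' hcomm,
    powerfulNilpotencyClass_eq_two hnonabelian hcomm⟩

theorem omega_statement_14 (p : ℕ) (hp : p.Prime) (hp2 : p ≠ 2) :
    ∃ (G : Type) (_ : Group G) (_ : Finite G),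
      IsPGroup p G ∧ IsPowerful p G ∧
      ¬(∀ x ∈ omegaSubgroup p 2 (subgroupPow (⊤ : Subgroup G) p),
          ∀ y ∈ omegaSubgroup p 2 (subgroupPow (⊤ : Subgroup G) p), x * y = y * x) ∧
      IsPowerfullyNilpotent p ↥(omegaSubgroup p 2 (subgroupPow (⊤ : Subgroup G) p)) ∧
      powerfulNilpotencyClass p
        ↥(omegaSubgroup p 2 (subgroupPow (⊤ : Subgroup G) p)) = 2 :=
  omega_statement_14_general p (lt_of_le_of_ne hp.two_le hp2.symm)
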